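/- For every real a > 0, the absolutely convergent integral ∫₁^∞ sin(a·x) · (ln x)²/x² dx equals a·[ γ·(−γ + 2 − ln a)·ln a + (π²/12)·(ln a − 1 + γ) − (2/3)·ζ(3) − 2·ln a + (ln a)² − (1/3)·(ln a)³ − γ³/3 − 2γ + γ² + 2 ] − 2a · Σ_{n=1}^∞ (−a²)^n / ((2n+1)! · (2n)³), where γ is the Euler–Mascheroni constant and ζ(3) = Σ_{n=1}^∞ 1/n³, and the series converges absolutely. -/

import Mathlib

open MeasureTheory
open Filter Topology Asymptotics

/-! Remove the linear Taylor term of `sin (a x)` on `(0, 1]`. For small `e > 0` the Mellin transform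
of `sin (a x)` then gives
`e ∫₀^∞ (sin (a x) - a x 𝟙_{x ≤ 1}) x ^ (e - 2) dx + a`
`  = a Γ(1 + e) cos (π e / 2) a ^ (-e) / (1 - e)`.
Expand both sides to third order as `e → 0⁺`. On the left, the coefficient of `e ^ 3` is half of the
second logarithmic moment, which is the wanted integral over `(1, ∞)` plus an integral over
`(0, 1]` that the power series of the sine evaluates term by term. The right-hand side is `a` times
the exponential of a sum of logarithms, whose expansions are explicit; that of `log Γ` comes from
Euler's limit formula and contributes `γ`, `ζ(2)` and `ζ(3)`. -/

section MellinSine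

lemma integrableOn_rpow_mul_exp_neg_mul {s v : ℝ} (hs : 0 < s) (hv : 0 < v) :
    IntegrableOn (fun t : ℝ => t ^ (s - 1) * Real.exp (-(v * t))) (Set.Ioi 0) := by
  simpa using integrableOn_rpow_mul_exp_neg_mul_rpow (s := s - 1) (p := 1) (b := v)
    (by linarith) one_pos hv

lemma integral_rpow_mul_rpow_mul_exp_neg_mul {s v : ℝ} (hs : 0 < s) (hv : 0 < v) :
    ∫ t in Set.Ioi (0 : ℝ), v ^ s * (t ^ (s - 1) * Real.exp (-(v * t))) = Real.Gamma s := by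
  rw [integral_const_mul, Real.integral_rpow_mul_exp_neg_mul_Ioi hs hv, ← mul_assoc,
    ← Real.mul_rpow hv.le (by positivity), mul_one_div_cancel hv.ne', Real.one_rpow, one_mul]

lemma integral_mul_rpow_neg_mul_Gamma {g : ℝ → ℝ} {s : ℝ} (hs : 0 < s)
    (hg : IntegrableOn (fun x => g x * x ^ (-s)) (Set.Ioi 0)) :
    (∫ x in Set.Ioi (0 : ℝ), g x * x ^ (-s)) * Real.Gamma s =
      ∫ t in Set.Ioi (0 : ℝ), t ^ (s - 1) * ∫ x in Set.Ioi (0 : ℝ), g x * Real.exp (-(x * t)) := by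
  let K : ℝ → ℝ → ℝ := fun x t => x ^ s * (t ^ (s - 1) * Real.exp (-(x * t)))
  have K_nonneg {x t : ℝ} (hx : 0 < x) (ht : 0 < t) : 0 ≤ K x t := by positivity
  have integral_K {x : ℝ} (hx : 0 < x) : ∫ t in Set.Ioi (0 : ℝ), K x t = Real.Gamma s :=
    integral_rpow_mul_rpow_mul_exp_neg_mul hs hx
  have integral_norm_K {x : ℝ} (hx : 0 < x) :
      ∫ t in Set.Ioi (0 : ℝ), ‖K x t‖ = Real.Gamma s :=
    (setIntegral_congr_fun measurableSet_Ioi fun t ht =>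
      Real.norm_of_nonneg (K_nonneg hx ht)).trans (integral_K hx)
  have integrable_prod : Integrable (Function.uncurry fun x t => g x * x ^ (-s) * K x t)
      ((volume.restrict (Set.Ioi (0 : ℝ))).prod (volume.restrict (Set.Ioi (0 : ℝ)))) := by
    refine (integrable_prod_iff ?_).2 ⟨?_, ?_⟩
    · exact hg.1.comp_fst.mul (Measurable.aestronglyMeasurable (by fun_prop))
    · filter_upwards [ae_restrict_mem measurableSet_Ioi] with x hx
      exact ((integrableOn_rpow_mul_exp_neg_mul hs hx).const_mul (x ^ s)).const_mul (g x * x ^ (-s))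
    · refine (hg.norm.mul_const (Real.Gamma s)).congr ?_
      filter_upwards [ae_restrict_mem measurableSet_Ioi] with x hx
      simp only [Function.uncurry, norm_mul _ (K x _), integral_const_mul, integral_norm_K hx]
  calc (∫ x in Set.Ioi (0 : ℝ), g x * x ^ (-s)) * Real.Gamma s
      = ∫ x in Set.Ioi (0 : ℝ), ∫ t in Set.Ioi (0 : ℝ), g x * x ^ (-s) * K x t := by
        rw [← integral_mul_const]
        refine setIntegral_congr_fun measurableSet_Ioi fun x hx => ?_
        simp only [integral_const_mul, integral_K hx]
    _ = ∫ t in Set.Ioi (0 : ℝ), ∫ x in Set.Ioi (0 : ℝ), g x * x ^ (-s) * K x t :=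
        integral_integral_swap integrable_prod
    _ = _ := by
        refine setIntegral_congr_fun measurableSet_Ioi fun t _ => ?_
        simp only [← integral_const_mul]
        refine setIntegral_congr_fun measurableSet_Ioi fun x hx => ?_
        have : x ^ (-s) * x ^ s = 1 := by
          rw [← Real.rpow_add hx, neg_add_cancel, Real.rpow_zero]
        linear_combination g x * (t ^ (s - 1) * Real.exp (-(x * t))) * this

lemma integral_sin_mul_exp_neg_mul (a : ℝ) {t : ℝ} (ht : 0 < t) :
    ∫ x in Set.Ioi (0 : ℝ), Real.sin (a * x) * Real.exp (-(x * t)) = a / (a ^ 2 + t ^ 2) := by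
  have hre : (-t + a * Complex.I : ℂ).re < 0 := by simpa using ht
  calc ∫ x in Set.Ioi (0 : ℝ), Real.sin (a * x) * Real.exp (-(x * t))
      = ∫ x in Set.Ioi (0 : ℝ), RCLike.im (Complex.exp ((-t + a * Complex.I) * x)) := by
        simp [Complex.exp_im, mul_comm]
    _ = RCLike.im (∫ x in Set.Ioi (0 : ℝ), Complex.exp ((-t + a * Complex.I) * x)) :=
        integral_im (integrableOn_exp_mul_complex_Ioi hre 0)
    _ = a / (a ^ 2 + t ^ 2) := by
        rw [integral_exp_mul_complex_Ioi hre]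
        simp [Complex.div_im, Complex.normSq_apply]
        ring

lemma integral_rpow_neg_mul_one_div_add {b s : ℝ} (hb : 0 < b) (hs : 0 < s) (hs' : s < 1) :
    ∫ w in Set.Ioi (0 : ℝ), w ^ (-s) * (1 / (b + w)) =
      b ^ (-s) * (Real.pi / Real.sin (Real.pi * s)) := by
  have hg : ∀ x : ℝ, Real.exp (-(b * x)) * x ^ (-(1 - s)) = x ^ (s - 1) * Real.exp (-(b * x)) := by
    intro x
    rw [neg_sub, mul_comm]
  have hsw := integral_mul_rpow_neg_mul_Gamma (g := fun x => Real.exp (-(b * x)))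
    (sub_pos.2 hs') (by simpa only [hg] using integrableOn_rpow_mul_exp_neg_mul hs hb)
  have hexp : Set.EqOn (fun t : ℝ => t ^ (1 - s - 1) *
      ∫ x in Set.Ioi (0 : ℝ), Real.exp (-(b * x)) * Real.exp (-(x * t)))
      (fun t => t ^ (-s) * (1 / (b + t))) (Set.Ioi 0) := by
    intro t ht
    have hbt : -(b + t) < 0 := neg_neg_of_pos (add_pos hb ht)
    have hadd (x : ℝ) : Real.exp (-(b * x)) * Real.exp (-(x * t)) = Real.exp (-(b + t) * x) := by
      rw [← Real.exp_add]
      ring_nf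
    simp only [hadd]
    rw [integral_exp_mul_Ioi hbt, mul_zero, Real.exp_zero, neg_div_neg_eq, sub_sub_cancel_left]
  rw [← setIntegral_congr_fun measurableSet_Ioi hexp, ← hsw, ← Real.Gamma_mul_Gamma_one_sub,
    ← mul_assoc]
  simp only [hg]
  rw [Real.integral_rpow_mul_exp_neg_mul_Ioi hs hb, one_div, Real.inv_rpow hb.le,
    Real.rpow_neg hb.le]

lemma integrableOn_sin_mul_rpow (a : ℝ) {s : ℝ} (hs : 0 < s) (hs' : s < 1) :
    IntegrableOn (fun x : ℝ => Real.sin (a * x) * x ^ (s - 2)) (Set.Ioi 0) := by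
  rw [← Set.Ioc_union_Ioi_eq_Ioi (zero_le_one' ℝ)]
  refine IntegrableOn.union ?_ ?_
  · have hdom : IntegrableOn (fun x : ℝ => |a| * x ^ (s - 1)) (Set.Ioc 0 1) := by
      rw [← intervalIntegrable_iff_integrableOn_Ioc_of_le zero_le_one]
      exact (intervalIntegral.intervalIntegrable_rpow' (by linarith)).const_mul _
    refine hdom.mono' (by fun_prop) ?_
    filter_upwards [ae_restrict_mem measurableSet_Ioc] with x ⟨hx, _⟩
    calc ‖Real.sin (a * x) * x ^ (s - 2)‖
        = |Real.sin (a * x)| * x ^ (s - 2) := by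
          rw [norm_mul, Real.norm_eq_abs, Real.norm_of_nonneg (by positivity)]
      _ ≤ |a * x| * x ^ (s - 2) := by gcongr ?_ * _; exact Real.abs_sin_le_abs
      _ = |a| * x ^ (s - 1) := by
          rw [abs_mul, abs_of_pos hx, mul_assoc, ← Real.rpow_one_add' hx.le (by linarith)]
          ring_nf
  · refine (integrableOn_Ioi_rpow_of_lt (by linarith : s - 2 < -1) one_pos).bdd_mul
      (by fun_prop) (ae_of_all _ fun x => Real.abs_sin_le_one (a * x))

lemma integral_sin_mul_rpow_mul_Gamma (a : ℝ) {s : ℝ} (hs : 0 < s) (hs' : s < 1) :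
    (∫ x in Set.Ioi (0 : ℝ), Real.sin (a * x) * x ^ (s - 2)) * Real.Gamma (2 - s) =
      ∫ t in Set.Ioi (0 : ℝ), t ^ (1 - s) * (a / (a ^ 2 + t ^ 2)) := by
  have hsw := integral_mul_rpow_neg_mul_Gamma (g := fun x => Real.sin (a * x)) (s := 2 - s)
    (by linarith) (by simpa only [neg_sub] using integrableOn_sin_mul_rpow a hs hs')
  simp only [neg_sub] at hsw
  rw [hsw]
  refine setIntegral_congr_fun measurableSet_Ioi fun t ht => ?_
  simp only [integral_sin_mul_exp_neg_mul a ht]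
  ring_nf

lemma integral_rpow_mul_div_sq_add_sq {a s : ℝ} (ha : 0 < a) (hs : 0 < s) (hs' : s < 2) :
    ∫ t in Set.Ioi (0 : ℝ), t ^ (1 - s) * (a / (a ^ 2 + t ^ 2)) =
      a ^ (1 - s) * Real.pi / (2 * Real.sin (Real.pi * s / 2)) := by
  have a_pow : a * (a ^ 2) ^ (-(s / 2)) = a ^ (1 - s) := by
    rw [sub_eq_add_neg, Real.rpow_add ha, Real.rpow_one, ← Real.rpow_two, ← Real.rpow_mul ha.le]
    ring_nf
  calc ∫ t in Set.Ioi (0 : ℝ), t ^ (1 - s) * (a / (a ^ 2 + t ^ 2))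
      = ∫ t in Set.Ioi (0 : ℝ), a / 2 * ((2 * t ^ ((2 : ℝ) - 1)) •
          ((t ^ (2 : ℝ)) ^ (-(s / 2)) * (1 / (a ^ 2 + t ^ (2 : ℝ))))) := by
        refine setIntegral_congr_fun measurableSet_Ioi fun t (ht : 0 < t) => ?_
        have hpow : t ^ (1 - s) = t * (t ^ (2 : ℝ)) ^ (-(s / 2)) := by
          rw [sub_eq_add_neg, Real.rpow_add ht, Real.rpow_one, ← Real.rpow_mul ht.le]
          ring_nf
        rw [hpow, show (2 : ℝ) - 1 = 1 by norm_num, Real.rpow_one, Real.rpow_two, smul_eq_mul]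
        ring
    _ = a / 2 * ∫ w in Set.Ioi (0 : ℝ), w ^ (-(s / 2)) * (1 / (a ^ 2 + w)) := by
        rw [integral_const_mul, integral_comp_rpow_Ioi_of_pos (p := 2)
          (g := fun w => w ^ (-(s / 2)) * (1 / (a ^ 2 + w))) two_pos]
    _ = a / 2 * ((a ^ 2) ^ (-(s / 2)) * (Real.pi / Real.sin (Real.pi * (s / 2)))) := by
        rw [integral_rpow_neg_mul_one_div_add (by positivity) (by linarith) (by linarith)]
    _ = a ^ (1 - s) * Real.pi / (2 * Real.sin (Real.pi * s / 2)) := by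
        rw [← a_pow, mul_div_assoc Real.pi s]
        field_simp

lemma integral_sin_mul_rpow {a s : ℝ} (ha : 0 < a) (hs : 0 < s) (hs' : s < 1) :
    ∫ x in Set.Ioi (0 : ℝ), Real.sin (a * x) * x ^ (s - 2) =
      a ^ (1 - s) * Real.Gamma s * Real.cos (Real.pi * s / 2) / (1 - s) := by
  set θ := Real.pi * s / 2 with hθ
  have hθ_pos : 0 < θ := by positivity
  have hθ_lt : θ < Real.pi / 2 := by nlinarith [Real.pi_pos]
  have hsin : 0 < Real.sin θ := Real.sin_pos_of_pos_of_lt_pi hθ_pos (by linarith)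
  have hcos : 0 < Real.cos θ := Real.cos_pos_of_mem_Ioo ⟨by linarith, hθ_lt⟩
  have hGamma : 0 < Real.Gamma (1 - s) := Real.Gamma_pos_of_pos (by linarith)
  have Gamma_rec : Real.Gamma (2 - s) = (1 - s) * Real.Gamma (1 - s) := by
    rw [← Real.Gamma_add_one (by linarith)]
    ring_nf
  have reflection : Real.Gamma s * Real.Gamma (1 - s) =
      Real.pi / (2 * Real.sin θ * Real.cos θ) := by
    rw [Real.Gamma_mul_Gamma_one_sub, ← Real.sin_two_mul, hθ]
    ring_nf
  rw [eq_div_iff (by linarith)]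
  apply mul_right_cancel₀ hGamma.ne'
  rw [mul_assoc, ← Gamma_rec, integral_sin_mul_rpow_mul_Gamma a hs hs',
    integral_rpow_mul_div_sq_add_sq ha hs (by linarith), mul_right_comm, mul_assoc (a ^ (1 - s)),
    reflection, ← hθ]
  field_simp

end MellinSine

section MomentExpansion

lemma pow_mul_exp_le {δ t : ℝ} (hδ : 0 < δ) (ht : 0 ≤ t) (n : ℕ) :
    t ^ n * Real.exp (δ * t) ≤ n.factorial / δ ^ n * Real.exp (2 * δ * t) := by
  have h := Real.pow_div_factorial_le_exp (δ * t) (by positivity) n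
  rw [div_le_iff₀ (by positivity), mul_pow] at h
  have hpow : t ^ n ≤ n.factorial / δ ^ n * Real.exp (δ * t) := by
    rw [div_mul_eq_mul_div, le_div_iff₀ (by positivity)]
    linarith
  calc t ^ n * Real.exp (δ * t)
      ≤ n.factorial / δ ^ n * Real.exp (δ * t) * Real.exp (δ * t) := by gcongr
    _ = n.factorial / δ ^ n * Real.exp (2 * δ * t) := by
      rw [mul_assoc, ← Real.exp_add]; ring_nf

lemma abs_exp_sub_sum_le (x : ℝ) (n : ℕ) :
    |Real.exp x - ∑ k ∈ Finset.range n, x ^ k / k.factorial| ≤ |x| ^ n * Real.exp |x| := by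
  have := Complex.norm_exp_sub_sum_le_norm_mul_exp x n
  exact_mod_cast this

variable {α : Type*} [MeasurableSpace α] {μ : Measure α} {f ℓ : α → ℝ} {δ : ℝ}

lemma integrable_mul_of_abs_le_exp {g : α → ℝ} {C : ℝ}
    (hf : Integrable (fun x => f x * Real.exp (δ * |ℓ x|)) μ) (hℓ : AEStronglyMeasurable ℓ μ)
    (hg : AEStronglyMeasurable g μ) (hgC : ∀ x, |g x| ≤ C * Real.exp (δ * |ℓ x|)) :
    Integrable (fun x => f x * g x) μ := by
  have hexp : AEStronglyMeasurable (fun x => Real.exp (-(δ * |ℓ x|))) μ :=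
    Real.continuous_exp.comp_aestronglyMeasurable (hℓ.norm.const_mul δ).neg
  have hfg (x : α) : f x * g x =
      g x * Real.exp (-(δ * |ℓ x|)) * (f x * Real.exp (δ * |ℓ x|)) := by
    have : Real.exp (-(δ * |ℓ x|)) * Real.exp (δ * |ℓ x|) = 1 := by
      rw [← Real.exp_add, neg_add_cancel, Real.exp_zero]
    linear_combination (-(f x * g x)) * this
  simp only [hfg]
  refine hf.bdd_mul (c := C) (hg.mul hexp) (ae_of_all _ fun x => ?_)
  rw [norm_mul, Real.norm_eq_abs, Real.norm_of_nonneg (Real.exp_pos _).le, Real.exp_neg,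
    ← div_eq_mul_inv, div_le_iff₀ (Real.exp_pos _)]
  exact hgC x

lemma integrable_mul_pow (hδ : 0 < δ) (hf : Integrable (fun x => f x * Real.exp (δ * |ℓ x|)) μ)
    (hℓ : AEStronglyMeasurable ℓ μ) (n : ℕ) : Integrable (fun x => f x * ℓ x ^ n) μ := by
  refine integrable_mul_of_abs_le_exp (C := n.factorial / (δ / 2) ^ n) hf hℓ (hℓ.pow n) fun x => ?_
  have hone : 1 ≤ Real.exp (δ / 2 * |ℓ x|) := Real.one_le_exp (by positivity)
  calc |ℓ x ^ n| ≤ |ℓ x| ^ n * Real.exp (δ / 2 * |ℓ x|) := by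
        rw [abs_pow]
        exact le_mul_of_one_le_right (by positivity) hone
    _ ≤ n.factorial / (δ / 2) ^ n * Real.exp (2 * (δ / 2) * |ℓ x|) :=
        pow_mul_exp_le (half_pos hδ) (abs_nonneg _) n
    _ = _ := by rw [mul_div_cancel₀ δ two_ne_zero]

lemma integrable_mul_exp {e : ℝ} (he : |e| ≤ δ)
    (hf : Integrable (fun x => f x * Real.exp (δ * |ℓ x|)) μ) (hℓ : AEStronglyMeasurable ℓ μ) :
    Integrable (fun x => f x * Real.exp (e * ℓ x)) μ := by
  refine integrable_mul_of_abs_le_exp (C := 1) hf hℓ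
    (Real.continuous_exp.comp_aestronglyMeasurable (hℓ.const_mul e)) fun x => ?_
  rw [Real.abs_exp, one_mul, Real.exp_le_exp]
  calc e * ℓ x ≤ |e| * |ℓ x| := by rw [← abs_mul]; exact le_abs_self _
    _ ≤ δ * |ℓ x| := by gcongr

lemma integral_mul_exp_sub_moments {e : ℝ} (hδ : 0 < δ) (he : |e| ≤ δ)
    (hf : Integrable (fun x => f x * Real.exp (δ * |ℓ x|)) μ) (hℓ : AEStronglyMeasurable ℓ μ)
    (n : ℕ) :
    (∫ x, f x * Real.exp (e * ℓ x) ∂μ) -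
      ∑ k ∈ Finset.range n, (∫ x, f x * ℓ x ^ k ∂μ) / k.factorial * e ^ k =
      ∫ x, f x * (Real.exp (e * ℓ x) -
        ∑ k ∈ Finset.range n, (e * ℓ x) ^ k / k.factorial) ∂μ := by
  have hterm (k : ℕ) : Integrable (fun x => f x * ℓ x ^ k * (e ^ k / k.factorial)) μ :=
    (integrable_mul_pow hδ hf hℓ k).mul_const _
  have hsum (x : α) : f x * (Real.exp (e * ℓ x) -
      ∑ k ∈ Finset.range n, (e * ℓ x) ^ k / k.factorial) =
      f x * Real.exp (e * ℓ x) - ∑ k ∈ Finset.range n, f x * ℓ x ^ k * (e ^ k / k.factorial) := by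
    rw [mul_sub, Finset.mul_sum]
    congr! 2 with k
    ring
  simp only [hsum]
  rw [integral_sub (integrable_mul_exp he hf hℓ) (integrable_finsetSum _ fun k _ => hterm k),
    integral_finsetSum _ fun k _ => hterm k]
  simp only [integral_mul_const]
  congr! 2 with k
  ring

lemma isBigO_integral_mul_exp_sub_moments (hδ : 0 < δ)
    (hf : Integrable (fun x => f x * Real.exp (δ * |ℓ x|)) μ) (hℓ : AEStronglyMeasurable ℓ μ)
    (n : ℕ) :
    (fun e : ℝ => (∫ x, f x * Real.exp (e * ℓ x) ∂μ) -
      ∑ k ∈ Finset.range n, (∫ x, f x * ℓ x ^ k ∂μ) / k.factorial * e ^ k)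
      =O[𝓝 0] fun e => e ^ n := by
  set C : ℝ := n.factorial / (δ / 2) ^ n
  refine IsBigO.of_bound (∫ x, ‖f x * Real.exp (δ * |ℓ x|)‖ * C ∂μ) ?_
  filter_upwards [Metric.ball_mem_nhds (0 : ℝ) (half_pos hδ)] with e he
  rw [mem_ball_zero_iff, Real.norm_eq_abs] at he
  rw [integral_mul_exp_sub_moments hδ (by linarith) hf hℓ, ← integral_mul_const]
  refine norm_integral_le_of_norm_le ((hf.norm.mul_const C).mul_const _) (ae_of_all _ fun x => ?_)
  have hle : |e * ℓ x| ≤ δ / 2 * |ℓ x| := by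
    rw [abs_mul]
    gcongr
  calc ‖f x * (Real.exp (e * ℓ x) - ∑ k ∈ Finset.range n, (e * ℓ x) ^ k / k.factorial)‖
      ≤ |f x| * (|e * ℓ x| ^ n * Real.exp |e * ℓ x|) := by
        rw [norm_mul, Real.norm_eq_abs, Real.norm_eq_abs]
        gcongr
        exact abs_exp_sub_sum_le _ n
    _ ≤ |f x| * (|e| ^ n * (|ℓ x| ^ n * Real.exp (δ / 2 * |ℓ x|))) := by
        rw [abs_mul, mul_pow, mul_assoc, ← abs_mul]
        gcongr
    _ ≤ |f x| * (|e| ^ n * (C * Real.exp (2 * (δ / 2) * |ℓ x|))) := by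
        gcongr |f x| * (|e| ^ n * ?_)
        exact pow_mul_exp_le (half_pos hδ) (abs_nonneg _) n
    _ = ‖f x * Real.exp (δ * |ℓ x|)‖ * C * ‖e ^ n‖ := by
        rw [mul_div_cancel₀ δ two_ne_zero, norm_mul, Real.norm_eq_abs, Real.norm_eq_abs,
          Real.abs_exp, norm_pow, Real.norm_eq_abs]
        ring

end MomentExpansion

section Jets

open Polynomial in
lemma coeff_eq_zero_of_eval_isBigO {n : ℕ} {p : ℝ[X]}
    (hp : (fun e : ℝ => p.eval e) =O[𝓝[>] 0] fun e => e ^ n) {k : ℕ} (hk : k < n) :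
    p.coeff k = 0 := by
  induction n generalizing p k with
  | zero => simp at hk
  | succ n ih =>
    have hpow : Tendsto (fun e : ℝ => e ^ (n + 1)) (𝓝[>] 0) (𝓝 0) :=
      ((continuous_pow (n + 1)).tendsto' 0 0 (by simp)).mono_left nhdsWithin_le_nhds
    have hzero : p.coeff 0 = 0 := by
      rw [coeff_zero_eq_eval_zero]
      exact tendsto_nhds_unique (p.continuous.continuousAt.mono_left nhdsWithin_le_nhds)
        (hp.trans_tendsto hpow)
    have hdivX : (fun e : ℝ => p.divX.eval e) =O[𝓝[>] 0] fun e => e ^ n := by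
      refine ((isBigO_refl (fun e : ℝ => e⁻¹) (𝓝[>] 0)).mul hp).congr' ?_ ?_ <;>
        filter_upwards [self_mem_nhdsWithin] with e (he : 0 < e)
      · conv_lhs => rw [← divX_mul_X_add p, hzero, map_zero, add_zero, eval_mul, eval_X]
        field_simp
      · rw [pow_succ]
        field_simp
    cases k with
    | zero => exact hzero
    | succ k => rw [← coeff_divX]; exact ih hdivX (by omega)

lemma isBigO_exp_sub_of_isBigO_sub {u : ℝ → ℝ} {c₁ c₂ c₃ : ℝ}
    (hu : (fun e => u e - (c₁ * e + c₂ * e ^ 2 + c₃ * e ^ 3)) =O[𝓝 0] fun e => e ^ 4) :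
    (fun e => Real.exp (u e) - (1 + c₁ * e + (c₂ + c₁ ^ 2 / 2) * e ^ 2 +
      (c₃ + c₁ * c₂ + c₁ ^ 3 / 6) * e ^ 3)) =O[𝓝 0] fun e => e ^ 4 := by
  set P : ℝ → ℝ := fun e => c₁ * e + c₂ * e ^ 2 + c₃ * e ^ 3
  have hP0 : Tendsto P (𝓝 0) (𝓝 0) := (by fun_prop : Continuous P).tendsto' 0 0 (by simp [P])
  have hu0 : Tendsto u (𝓝 0) (𝓝 0) := by
    have : Tendsto (fun e => u e - P e) (𝓝 0) (𝓝 0) :=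
      hu.trans_tendsto ((continuous_pow 4).tendsto' 0 0 (by simp))
    simpa using this.add hP0
  have quartic_mul {Q : ℝ → ℝ} (hQ : Continuous Q) :
      (fun e : ℝ => e ^ 4 * Q e) =O[𝓝 0] fun e => e ^ 4 := by
    simpa using (isBigO_refl (fun e : ℝ => e ^ 4) (𝓝 0)).mul ((hQ.tendsto 0).isBigO_one ℝ)
  have hP : (fun e => P e ^ 4) =O[𝓝 0] fun e => e ^ 4 :=
    (quartic_mul (Q := fun e => (c₁ + c₂ * e + c₃ * e ^ 2) ^ 4) (by fun_prop)).congr_left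
      fun e => by simp only [P]; ring
  have exp_lipschitz := (Real.hasStrictDerivAt_exp 0).hasStrictFDerivAt.isBigO_sub
  have exp_sub_exp : (fun e => Real.exp (u e) - Real.exp (P e)) =O[𝓝 0] fun e => e ^ 4 :=
    (exp_lipschitz.comp_tendsto (hu0.prodMk_nhds hP0)).trans hu
  have exp_series := ((Real.exp_sub_sum_range_isBigO_pow 4).comp_tendsto hP0).trans hP
  -- `e ^ 4 * Q e` is what expanding `1 + P + P ^ 2 / 2 + P ^ 3 / 6` leaves above degree three.
  have truncation := quartic_mul (Q := fun e => c₁ * c₃ + (c₂ + c₃ * e) ^ 2 / 2 +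
    (c₁ ^ 2 * (c₂ + c₃ * e) + c₁ * e * (c₂ + c₃ * e) ^ 2) / 2 + e ^ 2 * (c₂ + c₃ * e) ^ 3 / 6)
    (by fun_prop)
  refine ((exp_sub_exp.add exp_series).add truncation).congr_left fun e => ?_
  simp only [Function.comp_apply, Finset.sum_range_succ, Finset.sum_range_zero, Nat.factorial, P]
  push_cast
  ring

end Jets

section LogExpansions

lemma isBigO_log_one_sub_add_sum (n : ℕ) :
    (fun w : ℝ => (∑ k ∈ Finset.range n, w ^ (k + 1) / (k + 1)) + Real.log (1 - w))
      =O[𝓝 0] fun w => w ^ (n + 1) := by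
  refine IsBigO.of_bound 2 ?_
  filter_upwards [Metric.ball_mem_nhds (0 : ℝ) one_half_pos] with w hw
  rw [mem_ball_zero_iff, Real.norm_eq_abs] at hw
  refine (Real.abs_log_sub_add_sum_range_le (by linarith) n).trans ?_
  rw [norm_pow, Real.norm_eq_abs, div_le_iff₀ (by linarith)]
  nlinarith [pow_nonneg (abs_nonneg w) (n + 1)]

lemma isBigO_log_cos_add_sq :
    (fun y : ℝ => Real.log (Real.cos y) + y ^ 2 / 2) =O[𝓝 0] fun y => y ^ 4 := by
  have cos_remainder : (fun y : ℝ => Real.cos y - (1 - y ^ 2 / 2)) =O[𝓝 0] fun y => y ^ 4 := by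
    refine IsBigO.of_bound (5 / 96) ?_
    filter_upwards [Metric.closedBall_mem_nhds (0 : ℝ) one_pos] with y hy
    rw [norm_pow, mul_comm]
    exact Real.cos_bound (by simpa using hy)
  have one_sub_cos : (fun y : ℝ => 1 - Real.cos y) =O[𝓝 0] fun y => y ^ 2 := by
    have hsq : (fun y : ℝ => y ^ 2 / 2) =O[𝓝 0] fun y => y ^ 2 :=
      ((isBigO_refl _ _).const_mul_left (1 / 2)).congr_left fun y => by ring
    refine (hsq.sub (cos_remainder.trans (isLittleO_pow_pow (by norm_num)).isBigO)).congr_left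
      fun y => by ring
  have hlim : Tendsto (fun y : ℝ => 1 - Real.cos y) (𝓝 0) (𝓝 0) :=
    (by fun_prop : Continuous fun y : ℝ => 1 - Real.cos y).tendsto' 0 0 (by simp)
  have one_sub_cos_sq : (fun y : ℝ => (1 - Real.cos y) ^ 2) =O[𝓝 0] fun y => y ^ 4 :=
    (one_sub_cos.pow 2).congr_right fun y => by ring
  have log_remainder := ((isBigO_log_one_sub_add_sum 1).comp_tendsto hlim).trans one_sub_cos_sq
  refine (log_remainder.add cos_remainder).congr_left fun y => ?_
  simp only [Function.comp_apply, Finset.sum_range_one, sub_sub_cancel]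
  push_cast
  ring

lemma one_add_div_nat_add_one_pos {e : ℝ} (he : -1 < e) (m : ℕ) : 0 < 1 + e / (m + 1 : ℝ) := by
  rw [one_add_div (by positivity)]
  have : (0 : ℝ) ≤ m := m.cast_nonneg
  exact div_pos (by linarith) (by positivity)

lemma sum_div_sub_log_one_add_div {e : ℝ} (he : -1 < e) (n : ℕ) :
    ∑ m ∈ Finset.range (n + 1), (e / (m + 1) - Real.log (1 + e / (m + 1))) =
      Real.BohrMollerup.logGammaSeq (1 + e) n + (harmonic (n + 1) - Real.log (n + 1 : ℕ)) * e +
        (1 + e) * (Real.log (n + 1 : ℕ) - Real.log n) := by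
  have hlog (m : ℕ) :
      Real.log (1 + e + m) = Real.log (m + 1 : ℕ) + Real.log (1 + e / (m + 1)) := by
    rw [← Real.log_mul (by positivity) (one_add_div_nat_add_one_pos he m).ne']
    congr 1
    push_cast
    field_simp
    ring
  have hfact : Real.log (n.factorial) + Real.log (n + 1 : ℕ) =
      ∑ m ∈ Finset.range (n + 1), Real.log (m + 1 : ℕ) := by
    rw [← Real.log_prod (fun m _ => by positivity), ← Nat.cast_prod,
      Finset.prod_range_add_one_eq_factorial, Nat.factorial_succ, Nat.cast_mul,
      Real.log_mul (by positivity) (by positivity), add_comm]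
  simp only [Real.BohrMollerup.logGammaSeq, hlog, Finset.sum_add_distrib, ← hfact, harmonic,
    Finset.sum_sub_distrib, div_eq_mul_inv, ← Finset.mul_sum]
  push_cast
  ring

lemma hasSum_log_Gamma_one_add {e : ℝ} (he : -1 < e) :
    HasSum (fun m : ℕ => e / (m + 1) - Real.log (1 + e / (m + 1)))
      (Real.log (Real.Gamma (1 + e)) + Real.eulerMascheroniConstant * e) := by
  have hnonneg (m : ℕ) : 0 ≤ e / (m + 1) - Real.log (1 + e / (m + 1)) := by
    linarith [Real.log_le_sub_one_of_pos (one_add_div_nat_add_one_pos he m)]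
  have hharm : Tendsto (fun n : ℕ => (harmonic (n + 1) : ℝ) - Real.log (n + 1 : ℕ)) atTop
      (𝓝 Real.eulerMascheroniConstant) :=
    (tendsto_add_atTop_iff_nat 1).2 Real.tendsto_harmonic_sub_log
  have hlog : Tendsto (fun n : ℕ => Real.log (n + 1 : ℕ) - Real.log n) atTop (𝓝 0) := by
    exact_mod_cast Real.tendsto_log_nat_add_one_sub_log
  rw [hasSum_iff_tendsto_nat_of_nonneg hnonneg, ← tendsto_add_atTop_iff_nat 1]
  simp only [sum_div_sub_log_one_add_div he]
  simpa only [mul_zero, add_zero] using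
    ((Real.BohrMollerup.tendsto_log_gamma (by linarith : 0 < 1 + e)).add
      (hharm.mul_const e)).add (hlog.const_mul (1 + e))

lemma abs_sub_log_one_add_sub_sum_le {y : ℝ} (hy : |y| ≤ 1 / 2) (n : ℕ) :
    |y - Real.log (1 + y) - ∑ k ∈ Finset.range n, (-y) ^ (k + 2) / (k + 2)| ≤
      2 * |y| ^ (n + 2) := by
  have log_bound := Real.abs_log_sub_add_sum_range_le (x := -y) (by rw [abs_neg]; linarith) (n + 1)
  rw [abs_neg, sub_neg_eq_add, Finset.sum_range_succ'] at log_bound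
  calc _ = |∑ k ∈ Finset.range n, (-y) ^ (k + 1 + 1) / ((k + 1 : ℕ) + 1 : ℝ) +
        (-y) ^ (0 + 1) / ((0 : ℕ) + 1 : ℝ) + Real.log (1 + y)| := by
        rw [← abs_neg]
        push_cast
        ring_nf
    _ ≤ |y| ^ (n + 1 + 1) / (1 - |y|) := log_bound
    _ ≤ 2 * |y| ^ (n + 2) := by
        rw [div_le_iff₀ (by linarith)]
        nlinarith [pow_nonneg (abs_nonneg y) (n + 2)]

lemma isBigO_log_Gamma_one_add (n : ℕ) :
    (fun e : ℝ => Real.log (Real.Gamma (1 + e)) + Real.eulerMascheroniConstant * e -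
      ∑ k ∈ Finset.range n, (∑' m : ℕ, 1 / ((m : ℝ) + 1) ^ (k + 2)) * ((-e) ^ (k + 2) / (k + 2)))
      =O[𝓝 0] fun e => e ^ (n + 2) := by
  have summable_zeta (k : ℕ) : Summable fun m : ℕ => 1 / ((m : ℝ) + 1) ^ (k + 2) := by
    exact_mod_cast (summable_nat_add_iff 1).2
      (Real.summable_one_div_nat_pow.2 (by omega : 1 < k + 2))
  refine IsBigO.of_bound ((∑' m : ℕ, 1 / ((m : ℝ) + 1) ^ (n + 2)) * 2) ?_
  filter_upwards [Metric.ball_mem_nhds (0 : ℝ) one_half_pos] with e he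
  rw [mem_ball_zero_iff, Real.norm_eq_abs] at he
  have hsum := (hasSum_log_Gamma_one_add (neg_lt_of_abs_lt (by linarith))).sub
    (hasSum_sum (s := Finset.range n) fun k _ =>
      (summable_zeta k).hasSum.mul_right ((-e) ^ (k + 2) / (k + 2)))
  rw [← hsum.tsum_eq, mul_assoc]
  refine tsum_of_norm_bounded ((summable_zeta n).hasSum.mul_right (2 * ‖e ^ (n + 2)‖)) fun m => ?_
  have y_abs : |e / (m + 1)| = |e| / (m + 1) := by
    rw [abs_div, abs_of_pos (by positivity : (0 : ℝ) < m + 1)]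
  have y_le : |e / (m + 1)| ≤ 1 / 2 := by
    rw [y_abs]
    exact (div_le_self (abs_nonneg e) (by simp)).trans he.le
  have hpow (k : ℕ) : 1 / ((m : ℝ) + 1) ^ (k + 2) * ((-e) ^ (k + 2) / (k + 2)) =
      (-(e / (m + 1))) ^ (k + 2) / (k + 2) := by
    rw [← neg_div, div_pow]
    ring
  simp only [hpow]
  calc _ ≤ 2 * |e / (m + 1)| ^ (n + 2) := abs_sub_log_one_add_sub_sum_le y_le n
    _ = 1 / (m + 1) ^ (n + 2) * (2 * ‖e ^ (n + 2)‖) := by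
        rw [y_abs, div_pow, norm_pow, Real.norm_eq_abs]
        ring

end LogExpansions

section TaylorPart

lemma integral_pow_succ_mul_log_sq (m : ℕ) :
    IntegrableOn (fun x : ℝ => x ^ (m + 1) * Real.log x ^ 2) (Set.Ioc 0 1) ∧
      ∫ x in Set.Ioc (0 : ℝ) 1, x ^ (m + 1) * Real.log x ^ 2 = 2 / ((m : ℝ) + 2) ^ 3 := by
  set F : ℝ → ℝ := fun x => x ^ (m + 2) *
    (Real.log x ^ 2 / (m + 2) - 2 * Real.log x / (m + 2) ^ 2 + 2 / (m + 2) ^ 3)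
  have F_cont : ContinuousOn F (Set.Icc 0 1) := by
    have hF (x : ℝ) : F x = x ^ m * (x * Real.log x) ^ 2 / (m + 2) -
        2 * x ^ (m + 1) * (x * Real.log x) / (m + 2) ^ 2 + 2 * x ^ (m + 2) / (m + 2) ^ 3 := by
      simp only [F]
      ring
    have := Real.continuous_mul_log
    simp only [funext hF]
    fun_prop
  have F_deriv : ∀ x ∈ Set.Ioo (0 : ℝ) 1, HasDerivAt F (x ^ (m + 1) * Real.log x ^ 2) x := by
    intro x ⟨hx, _⟩
    have hlog := Real.hasDerivAt_log hx.ne'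
    refine ((hasDerivAt_pow (m + 2) x).mul ((((hlog.pow 2).div_const (m + 2 : ℝ)).sub
      ((hlog.const_mul 2).div_const ((m + 2 : ℝ) ^ 2))).add_const
        (2 / (m + 2 : ℝ) ^ 3))).congr_deriv ?_
    push_cast
    simp only [Pi.sub_apply, Pi.pow_apply]
    field_simp
    ring
  have integrable := intervalIntegral.integrableOn_deriv_of_nonneg F_cont F_deriv
    fun x hx => mul_nonneg (pow_nonneg hx.1.le _) (sq_nonneg _)
  refine ⟨integrable, ?_⟩
  rw [← intervalIntegral.integral_of_le zero_le_one,
    intervalIntegral.integral_eq_sub_of_hasDerivAt_of_le zero_le_one F_cont F_deriv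
      ((intervalIntegrable_iff_integrableOn_Ioc_of_le zero_le_one).2 integrable)]
  simp [F]

lemma summable_abs_pow_div_factorial_mul_cube (b : ℝ) :
    Summable (fun n : ℕ =>
      |b ^ (n + 1) / ((2 * (n + 1) + 1).factorial * (2 * (n + 1) : ℝ) ^ 3)|) := by
  refine Summable.of_nonneg_of_le (fun _ => abs_nonneg _) (fun n => ?_)
    ((summable_nat_add_iff 1).2 (Real.summable_pow_div_factorial |b|))
  rw [abs_div, abs_pow, abs_of_pos (by positivity : (0 : ℝ) < _ * _)]
  gcongr
  have hfact : ((n + 1).factorial : ℝ) ≤ (2 * (n + 1) + 1).factorial := by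
    exact_mod_cast Nat.factorial_le (by omega)
  have hcube : (1 : ℝ) ≤ (2 * (n + 1)) ^ 3 := one_le_pow₀ (by linarith [n.cast_nonneg (α := ℝ)])
  nlinarith

lemma hasSum_sin_mul_sub_div_sq (a : ℝ) {x : ℝ} (hx : x ≠ 0) :
    HasSum (fun n : ℕ => a * (-a ^ 2) ^ (n + 1) / (2 * (n + 1) + 1).factorial * x ^ (2 * n + 1))
      ((Real.sin (a * x) - a * x) / x ^ 2) := by
  have h := ((hasSum_nat_add_iff' 1).2 (Real.hasSum_sin (a * x))).div_const (x ^ 2)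
  rw [Finset.sum_range_one, mul_zero, zero_add, pow_zero, one_mul, pow_one, Nat.factorial_one,
    Nat.cast_one, div_one] at h
  convert! h using 2 with n
  rw [neg_pow (a ^ 2), ← pow_mul, mul_pow]
  field_simp
  ring

lemma integral_tsum_mul_pow_succ_mul_log_sq {c : ℕ → ℝ} {m : ℕ → ℕ}
    (hc : Summable fun n => |c n| * (2 / ((m n : ℝ) + 2) ^ 3)) :
    ∫ x in Set.Ioc (0 : ℝ) 1, ∑' n, c n * (x ^ (m n + 1) * Real.log x ^ 2) =
      ∑' n, c n * (2 / ((m n : ℝ) + 2) ^ 3) := by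
  have norm_moment (n : ℕ) :
      ∫ x in Set.Ioc (0 : ℝ) 1, ‖c n * (x ^ (m n + 1) * Real.log x ^ 2)‖ =
        |c n| * (2 / ((m n : ℝ) + 2) ^ 3) := by
    rw [← (integral_pow_succ_mul_log_sq (m n)).2, ← integral_const_mul]
    refine setIntegral_congr_fun measurableSet_Ioc fun x hx => ?_
    have hx : 0 < x := hx.1
    simp only [norm_mul, Real.norm_eq_abs, abs_of_pos (pow_pos hx _),
      abs_of_nonneg (sq_nonneg (Real.log x))]
  rw [← integral_tsum_of_summable_integral_norm
    (fun n => (integral_pow_succ_mul_log_sq (m n)).1.const_mul (c n))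
    (by simpa only [norm_moment] using hc)]
  simp only [integral_const_mul, (integral_pow_succ_mul_log_sq _).2]

lemma integral_sin_mul_sub_mul_log_sq (a : ℝ) :
    ∫ x in Set.Ioc (0 : ℝ) 1, (Real.sin (a * x) - a * x) / x ^ 2 * Real.log x ^ 2 =
      2 * a * ∑' n : ℕ,
        (-a ^ 2) ^ (n + 1) / ((2 * (n + 1) + 1).factorial * (2 * (n + 1) : ℝ) ^ 3) := by
  set c : ℕ → ℝ := fun n => a * (-a ^ 2) ^ (n + 1) / (2 * (n + 1) + 1).factorial
  have moment (n : ℕ) : c n * (2 / (((2 * n : ℕ) : ℝ) + 2) ^ 3) = 2 * a *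
      ((-a ^ 2) ^ (n + 1) / ((2 * (n + 1) + 1).factorial * (2 * (n + 1) : ℝ) ^ 3)) := by
    simp only [c]
    push_cast
    field_simp
  have summable_moment : Summable fun n => |c n| * (2 / (((2 * n : ℕ) : ℝ) + 2) ^ 3) := by
    refine ((summable_abs_pow_div_factorial_mul_cube (-a ^ 2)).mul_left |2 * a|).congr fun n => ?_
    rw [← abs_mul, ← moment, abs_mul, abs_of_pos (by positivity : (0 : ℝ) < 2 / _)]
  have series : ∀ x ∈ Set.Ioc (0 : ℝ) 1, ∑' n, c n * (x ^ (2 * n + 1) * Real.log x ^ 2) =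
      (Real.sin (a * x) - a * x) / x ^ 2 * Real.log x ^ 2 := by
    intro x hx
    simp only [← mul_assoc]
    exact ((hasSum_sin_mul_sub_div_sq a hx.1.ne').mul_right _).tsum_eq
  rw [← setIntegral_congr_fun measurableSet_Ioc series,
    integral_tsum_mul_pow_succ_mul_log_sq summable_moment, ← tsum_mul_left]
  simp only [moment]

end TaylorPart

section RegularizedMoments

/-- The function `sin (a x)` with its linear Taylor term removed on `(-∞, 1]`, so that dividing by
`x ^ 2` leaves a function on `(0, ∞)` all of whose logarithmic moments converge. -/
noncomputable def regularizedSin (a x : ℝ) : ℝ :=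
  Real.sin (a * x) - (Set.Iic 1).indicator (fun x => a * x) x

lemma regularizedSin_of_le_one (a : ℝ) {x : ℝ} (hx : x ≤ 1) :
    regularizedSin a x = Real.sin (a * x) - a * x := by
  rw [regularizedSin, Set.indicator_of_mem (Set.mem_Iic.2 hx)]

lemma regularizedSin_of_one_lt (a : ℝ) {x : ℝ} (hx : 1 < x) :
    regularizedSin a x = Real.sin (a * x) := by
  rw [regularizedSin, Set.indicator_of_notMem (by simpa using hx), sub_zero]

lemma measurable_regularizedSin (a : ℝ) : Measurable (regularizedSin a) :=
  (by fun_prop : Measurable fun x => Real.sin (a * x)).sub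
    ((measurable_const_mul a).indicator measurableSet_Iic)

lemma abs_sin_sub_self_le_two_mul_sq (y : ℝ) : |Real.sin y - y| ≤ 2 * y ^ 2 := by
  rw [← sq_abs y]
  rcases le_total |y| 1 with hy | hy
  · have hcube : |Real.sin y - (y - y ^ 3 / 6)| ≤ |y| ^ 5 / 100 := Real.sin_bound hy
    have hy₃ : |y| ^ 3 ≤ |y| ^ 2 := pow_le_pow_of_le_one (abs_nonneg y) hy (by norm_num)
    have hy₅ : |y| ^ 5 ≤ |y| ^ 2 := pow_le_pow_of_le_one (abs_nonneg y) hy (by norm_num)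
    calc |Real.sin y - y| = |(Real.sin y - (y - y ^ 3 / 6)) - y ^ 3 / 6| := by ring_nf
      _ ≤ |Real.sin y - (y - y ^ 3 / 6)| + |y ^ 3 / 6| := abs_sub _ _
      _ ≤ |y| ^ 5 / 100 + |y| ^ 3 / 6 := by
        rw [abs_div, abs_pow, abs_of_pos (by norm_num : (0 : ℝ) < 6)]
        gcongr
      _ ≤ 2 * |y| ^ 2 := by linarith [sq_nonneg |y|]
  · calc |Real.sin y - y| ≤ |Real.sin y| + |y| := abs_sub _ _
      _ ≤ 2 * |y| := by linarith [Real.abs_sin_le_abs (x := y)]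
      _ ≤ 2 * |y| ^ 2 := by nlinarith

lemma norm_regularizedSin_div_sq_mul (a x : ℝ) {y : ℝ} (hy : 0 ≤ y) :
    ‖regularizedSin a x / x ^ 2 * y‖ = |regularizedSin a x| / x ^ 2 * y := by
  rw [norm_mul, norm_div, Real.norm_eq_abs, Real.norm_of_nonneg hy, norm_pow, Real.norm_eq_abs,
    sq_abs]

lemma integrableOn_regularizedSin_div_sq_mul_exp (a : ℝ) {δ : ℝ} (hδ : δ < 1) :
    IntegrableOn (fun x => regularizedSin a x / x ^ 2 * Real.exp (δ * |Real.log x|))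
      (Set.Ioi 0) := by
  have meas : Measurable fun x => regularizedSin a x / x ^ 2 * Real.exp (δ * |Real.log x|) := by
    have := measurable_regularizedSin a
    fun_prop
  rw [← Set.Ioc_union_Ioi_eq_Ioi (zero_le_one' ℝ)]
  refine IntegrableOn.union ?_ ?_
  · have hdom : IntegrableOn (fun x : ℝ => 2 * a ^ 2 * x ^ (-δ)) (Set.Ioc 0 1) := by
      rw [← intervalIntegrable_iff_integrableOn_Ioc_of_le zero_le_one]
      exact (intervalIntegral.intervalIntegrable_rpow' (by linarith)).const_mul _
    refine hdom.mono' meas.aestronglyMeasurable ?_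
    filter_upwards [ae_restrict_mem measurableSet_Ioc] with x ⟨hx, hx'⟩
    have hexp : Real.exp (δ * |Real.log x|) = x ^ (-δ) := by
      rw [abs_of_nonpos (Real.log_nonpos hx.le hx'), Real.rpow_def_of_pos hx]
      ring_nf
    rw [norm_regularizedSin_div_sq_mul a x (Real.exp_pos _).le, hexp,
      regularizedSin_of_le_one a hx']
    gcongr
    rw [div_le_iff₀ (by positivity)]
    exact (abs_sin_sub_self_le_two_mul_sq (a * x)).trans_eq (by ring)
  · have hdom : IntegrableOn (fun x : ℝ => x ^ (δ - 2)) (Set.Ioi 1) :=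
      integrableOn_Ioi_rpow_of_lt (by linarith) one_pos
    refine hdom.mono' meas.aestronglyMeasurable ?_
    filter_upwards [ae_restrict_mem measurableSet_Ioi] with x (hx : 1 < x)
    have hx₀ : 0 < x := one_pos.trans hx
    have hexp : Real.exp (δ * |Real.log x|) = x ^ δ := by
      rw [abs_of_nonneg (Real.log_nonneg hx.le), Real.rpow_def_of_pos hx₀, mul_comm]
    rw [norm_regularizedSin_div_sq_mul a x (Real.exp_pos _).le, hexp,
      regularizedSin_of_one_lt a hx, Real.rpow_sub hx₀, Real.rpow_two, div_mul_eq_mul_div]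
    gcongr
    exact mul_le_of_le_one_left (by positivity) (Real.abs_sin_le_one _)

lemma integral_regularizedSin_div_sq_mul_exp (a : ℝ) {e : ℝ} (he : 0 < e) (he' : e < 1) :
    ∫ x in Set.Ioi (0 : ℝ), regularizedSin a x / x ^ 2 * Real.exp (e * Real.log x) =
      (∫ x in Set.Ioi (0 : ℝ), Real.sin (a * x) * x ^ (e - 2)) - a / e := by
  have integrableOn_rpow : IntegrableOn (fun x : ℝ => a * x ^ (e - 1)) (Set.Ioc 0 1) := by
    rw [← intervalIntegrable_iff_integrableOn_Ioc_of_le zero_le_one]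
    exact (intervalIntegral.intervalIntegrable_rpow' (by linarith)).const_mul _
  have inter : Set.Iic (1 : ℝ) ∩ Set.Ioi 0 = Set.Ioc 0 1 := by
    rw [Set.inter_comm, Set.Ioi_inter_Iic]
  have integral_linear : ∫ x in Set.Ioi (0 : ℝ),
      (Set.Iic 1).indicator (fun x => a * x ^ (e - 1)) x = a / e := by
    rw [integral_indicator measurableSet_Iic, Measure.restrict_restrict measurableSet_Iic, inter,
      integral_const_mul, ← intervalIntegral.integral_of_le zero_le_one,
      integral_rpow (Or.inl (by linarith)), sub_add_cancel, Real.one_rpow,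
      Real.zero_rpow he.ne', sub_zero, mul_one_div]
  rw [← integral_linear, ← integral_sub (integrableOn_sin_mul_rpow a he he')]
  · refine setIntegral_congr_fun measurableSet_Ioi fun x (hx : 0 < x) => ?_
    have hpow : x ^ (e - 2) = Real.exp (e * Real.log x) / x ^ 2 := by
      rw [Real.rpow_sub hx, Real.rpow_two, Real.rpow_def_of_pos hx, mul_comm e]
    have hpow' : x ^ (e - 1) = x * x ^ (e - 2) := by
      rw [← Real.rpow_one_add' hx.le (by linarith)]
      ring_nf
    rcases le_or_gt x 1 with hx₁ | hx₁
    · simp only [regularizedSin_of_le_one a hx₁, Set.indicator_of_mem (Set.mem_Iic.2 hx₁), hpow',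
        hpow]
      ring
    · simp only [regularizedSin_of_one_lt a hx₁, Set.indicator_of_notMem
        (by simpa using hx₁ : x ∉ Set.Iic 1), hpow]
      ring
  · rw [integrable_indicator_iff measurableSet_Iic, IntegrableOn,
      Measure.restrict_restrict measurableSet_Iic, inter]
    exact integrableOn_rpow

lemma integrableOn_regularizedSin_div_sq_mul_log_pow (a : ℝ) (n : ℕ) :
    IntegrableOn (fun x => regularizedSin a x / x ^ 2 * Real.log x ^ n) (Set.Ioi 0) :=
  integrable_mul_pow one_half_pos (integrableOn_regularizedSin_div_sq_mul_exp a one_half_lt_one)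
    Real.measurable_log.aestronglyMeasurable n

lemma integrableOn_sin_mul_log_pow_div_sq (a : ℝ) (n : ℕ) :
    IntegrableOn (fun x => Real.sin (a * x) * Real.log x ^ n / x ^ 2) (Set.Ioi 1) := by
  refine ((integrableOn_regularizedSin_div_sq_mul_log_pow a n).mono_set
    (Set.Ioi_subset_Ioi zero_le_one)).congr_fun (fun x hx => ?_) measurableSet_Ioi
  simp only [regularizedSin_of_one_lt a hx]
  ring

lemma integral_regularizedSin_div_sq_mul_log_pow (a : ℝ) (n : ℕ) :
    ∫ x in Set.Ioi (0 : ℝ), regularizedSin a x / x ^ 2 * Real.log x ^ n =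
      (∫ x in Set.Ioc (0 : ℝ) 1, (Real.sin (a * x) - a * x) / x ^ 2 * Real.log x ^ n) +
        ∫ x in Set.Ioi (1 : ℝ), Real.sin (a * x) * Real.log x ^ n / x ^ 2 := by
  have integrable := integrableOn_regularizedSin_div_sq_mul_log_pow a n
  rw [← Set.Ioc_union_Ioi_eq_Ioi (zero_le_one' ℝ)] at integrable ⊢
  rw [setIntegral_union (Set.Ioc_disjoint_Ioi le_rfl) measurableSet_Ioi integrable.left_of_union
    integrable.right_of_union]
  congr 1
  · refine setIntegral_congr_fun measurableSet_Ioc fun x hx => ?_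
    simp only [regularizedSin_of_le_one a hx.2]
  · refine setIntegral_congr_fun measurableSet_Ioi fun x hx => ?_
    simp only [regularizedSin_of_one_lt a hx]
    ring

/-- The logarithm of `(e / a) ∫₀^∞ sin (a x) x ^ (e - 2) dx` for `0 < e < 1`. -/
noncomputable def logSinMellin (a e : ℝ) : ℝ :=
  Real.log (Real.Gamma (1 + e)) - Real.log a * e + Real.log (Real.cos (Real.pi / 2 * e)) -
    Real.log (1 - e)

lemma mul_integral_regularizedSin_add {a e : ℝ} (ha : 0 < a) (he : 0 < e) (he' : e < 1) :
    e * (∫ x in Set.Ioi (0 : ℝ), regularizedSin a x / x ^ 2 * Real.exp (e * Real.log x)) + a =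
      a * Real.exp (logSinMellin a e) := by
  have hcos : 0 < Real.cos (Real.pi / 2 * e) :=
    Real.cos_pos_of_mem_Ioo ⟨by nlinarith [Real.pi_pos], by nlinarith [Real.pi_pos]⟩
  have hpow : a ^ (1 - e) = a / Real.exp (Real.log a * e) := by
    rw [Real.rpow_sub ha, Real.rpow_one, Real.rpow_def_of_pos ha]
  rw [integral_regularizedSin_div_sq_mul_exp a he he', integral_sin_mul_rpow ha he he',
    logSinMellin, Real.exp_sub, Real.exp_add, Real.exp_sub,
    Real.exp_log (Real.Gamma_pos_of_pos (by linarith)), Real.exp_log hcos,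
    Real.exp_log (sub_pos.2 he'), add_comm 1 e, Real.Gamma_add_one he.ne', hpow,
    div_mul_eq_mul_div Real.pi]
  field_simp
  ring

lemma isBigO_logSinMellin_sub (a : ℝ) :
    (fun e => logSinMellin a e -
      ((1 - Real.eulerMascheroniConstant - Real.log a) * e + (1 / 2 - Real.pi ^ 2 / 24) * e ^ 2 +
        (1 - ∑' n : ℕ, (1 : ℝ) / ((n : ℝ) + 1) ^ 3) / 3 * e ^ 3)) =O[𝓝 0] fun e => e ^ 4 := by
  have zeta_two : ∑' n : ℕ, (1 : ℝ) / ((n : ℝ) + 1) ^ 2 = Real.pi ^ 2 / 6 := by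
    have := (hasSum_nat_add_iff' 1).2 hasSum_zeta_two
    simpa using this.tsum_eq
  have hscale : Tendsto (fun e : ℝ => Real.pi / 2 * e) (𝓝 0) (𝓝 0) :=
    (continuous_const_mul _).tendsto' 0 0 (mul_zero _)
  have hscale_pow : (fun e : ℝ => (Real.pi / 2 * e) ^ 4) =O[𝓝 0] fun e => e ^ 4 := by
    simp only [mul_pow]
    exact (isBigO_refl _ _).const_mul_left _
  have log_cos := (isBigO_log_cos_add_sq.comp_tendsto hscale).trans hscale_pow
  refine (((isBigO_log_Gamma_one_add 2).add log_cos).sub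
    (isBigO_log_one_sub_add_sum 3)).congr_left fun e => ?_
  simp only [Function.comp_apply, logSinMellin, Finset.sum_range_succ, Finset.sum_range_zero,
    zero_add, zeta_two, Nat.reduceAdd]
  push_cast
  ring

open Polynomial in
lemma integral_regularizedSin_div_sq_mul_log_sq {a : ℝ} (ha : 0 < a) {c₁ c₂ c₃ : ℝ}
    (hjet : (fun e => logSinMellin a e - (c₁ * e + c₂ * e ^ 2 + c₃ * e ^ 3)) =O[𝓝 0]
      fun e => e ^ 4) :
    ∫ x in Set.Ioi (0 : ℝ), regularizedSin a x / x ^ 2 * Real.log x ^ 2 =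
      2 * a * (c₃ + c₁ * c₂ + c₁ ^ 3 / 6) := by
  obtain ⟨M, hM⟩ : ∃ M : ℕ → ℝ, ∀ k,
      ∫ x in Set.Ioi (0 : ℝ), regularizedSin a x / x ^ 2 * Real.log x ^ k = M k :=
    ⟨_, fun _ => rfl⟩
  have moments := ((isBigO_refl (fun e : ℝ => e) (𝓝 0)).mul
    (isBigO_integral_mul_exp_sub_moments one_half_pos
      (integrableOn_regularizedSin_div_sq_mul_exp a one_half_lt_one)
      Real.measurable_log.aestronglyMeasurable 3)).mono (nhdsWithin_le_nhds (s := Set.Ioi 0))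
  have gamma_side := ((isBigO_exp_sub_of_isBigO_sub hjet).const_mul_left a).mono
    (nhdsWithin_le_nhds (s := Set.Ioi 0))
  let p : ℝ[X] := C (a * c₁ - M 0) * X + C (a * (c₂ + c₁ ^ 2 / 2) - M 1) * X ^ 2 +
    C (a * (c₃ + c₁ * c₂ + c₁ ^ 3 / 6) - M 2 / 2) * X ^ 3
  have hp : (fun e => p.eval e) =O[𝓝[>] 0] fun e => e ^ 4 := by
    refine ((moments.congr_right fun e => by ring).sub gamma_side).congr' ?_ .rfl
    filter_upwards [Ioo_mem_nhdsGT one_pos] with e he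
    have := mul_integral_regularizedSin_add ha he.1 he.2
    simp only [p, hM, Finset.sum_range_succ, Finset.sum_range_zero, eval_add, eval_mul, eval_C,
      eval_X, eval_pow, Nat.factorial]
    push_cast
    linear_combination this
  have hcoeff : p.coeff 3 = a * (c₃ + c₁ * c₂ + c₁ ^ 3 / 6) - M 2 / 2 := by
    simp only [p, coeff_add, coeff_C_mul, coeff_X_pow, coeff_X]
    norm_num
  rw [hM]
  linear_combination (-2) * hcoeff.symm.trans (coeff_eq_zero_of_eval_isBigO hp (by norm_num))

end RegularizedMoments

/-- For every real `a > 0`, the absolutely convergent integral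
`∫₁^∞ sin(ax)(ln x)²/x² dx` equals
`a[γ(-γ+2-ln a)ln a + (π²/12)(ln a - 1 + γ) - (2/3)ζ(3) - 2 ln a + (ln a)²
  - (1/3)(ln a)³ - γ³/3 - 2γ + γ² + 2] - 2a Σ_{n≥1} (-a²)^n/((2n+1)! (2n)³)`,
with `ζ(3) = Σ_{n≥1} 1/n³`, the series converging absolutely. -/
theorem sin_log_sq_integral (a : ℝ) (ha : 0 < a) :
    IntegrableOn (fun x : ℝ => Real.sin (a * x) * Real.log x ^ 2 / x ^ 2)
      (Set.Ioi (1 : ℝ)) ∧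
    Summable (fun n : ℕ =>
      |(-a ^ 2) ^ (n + 1) / ((2 * (n + 1) + 1).factorial * (2 * (n + 1) : ℝ) ^ 3)|) ∧
    (∫ x in Set.Ioi (1 : ℝ), Real.sin (a * x) * Real.log x ^ 2 / x ^ 2) =
      a * (Real.eulerMascheroniConstant *
              (-Real.eulerMascheroniConstant + 2 - Real.log a) * Real.log a +
            (Real.pi ^ 2 / 12) * (Real.log a - 1 + Real.eulerMascheroniConstant) -
            (2 / 3) * (∑' n : ℕ, (1 : ℝ) / ((n : ℝ) + 1) ^ 3) -
            2 * Real.log a + Real.log a ^ 2 - (1 / 3) * Real.log a ^ 3 -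
            Real.eulerMascheroniConstant ^ 3 / 3 - 2 * Real.eulerMascheroniConstant +
            Real.eulerMascheroniConstant ^ 2 + 2) -
        2 * a * ∑' n : ℕ,
          (-a ^ 2) ^ (n + 1) / ((2 * (n + 1) + 1).factorial * (2 * (n + 1) : ℝ) ^ 3) := by
  refine ⟨integrableOn_sin_mul_log_pow_div_sq a 2,
    summable_abs_pow_div_factorial_mul_cube (-a ^ 2), ?_⟩
  have total_moment := integral_regularizedSin_div_sq_mul_log_sq ha (isBigO_logSinMellin_sub a)
  rw [integral_regularizedSin_div_sq_mul_log_pow, integral_sin_mul_sub_mul_log_sq] at total_moment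
  linear_combination total_moment
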